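/- arXiv:1911.08924 — 3 statements merged into one kernel-verified Lean document; each statement's English description precedes it below -/
import Mathlib

section
/- For every n ≥ 1 and every balanced coloring c of the 2n collinear points, there exists a non-crossing bichromatic Hamiltonian path drawn on two pages one of whose endpoints is the leftmost point. Precisely: there exist a bijection v : Fin (2n) → Fin (2n) with v 0 = 0 (the path starts at the leftmost point) and c (v i) ≠ c (v (i+1)) for every i < 2n−1, and a page assignment σ : Fin (2n−1) → Bool of the path edges e_i = {v i, v (i+1)} such that no two edges assigned to the same page interleave. -/
/-- Two edges, given as (unordered) pairs of natural-number indices, interleave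
(cross when drawn as circular arcs on the same side of the line):
with `a < b`, `c < d` the normalized endpoints, `a < c < b < d` or `c < a < d < b`. -/
def Interleaves (p q : ℕ × ℕ) : Prop :=
  (min p.1 p.2 < min q.1 q.2 ∧ min q.1 q.2 < max p.1 p.2 ∧ max p.1 p.2 < max q.1 q.2) ∨
  (min q.1 q.2 < min p.1 p.2 ∧ min p.1 p.2 < max q.1 q.2 ∧ max q.1 q.2 < max p.1 p.2)

/-!
Scan the points from right to left, maintaining a two-page path `Q` on some of the scanned points
and a stack `P` of pending ones, all of the same color `d` as the current end of `Q`. A new point of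
color `d` becomes pending; a new point of the other color is appended to `Q`, followed by the
leftmost pending point, if any. Every new edge joins the new point, which lies to the left of all
others, to a point visible from the left on the page chosen for the edge, so it crosses nothing. An
edge from the new point to the old end of `Q` hides only the pending points to the left of that old
end, on a single page, and these used to be visible on both. Once only the leftmost point is left,
the scanned points contain one more point of the opposite color than of its own, which forces `P` to
be empty and the end of `Q` to have the opposite color, so that the leftmost point can be appended.
-/

/-- The edge `e`, drawn as an arc, passes over the point `v`. -/
def Covers (e : ℕ × ℕ) (v : ℕ) : Prop :=
  min e.1 e.2 < v ∧ v < max e.1 e.2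

theorem Interleaves.symm {e f : ℕ × ℕ} (h : Interleaves e f) : Interleaves f e :=
  Or.symm h

theorem not_interleaves_self (e : ℕ × ℕ) : ¬ Interleaves e e := by
  unfold Interleaves
  omega

theorem interleaves_swap_left {a b : ℕ} {e : ℕ × ℕ} :
    Interleaves (a, b) e ↔ Interleaves (b, a) e := by
  simp only [Interleaves, min_comm a b, max_comm a b]

theorem Interleaves.covers_of_le {x v : ℕ} {e : ℕ × ℕ} (h : Interleaves (x, v) e)
    (hx : x ≤ min e.1 e.2) : Covers e v := by
  unfold Interleaves at h
  unfold Covers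
  omega

section Path

variable {N : ℕ} {c : Fin N → Bool} {Q : List (Fin N × Bool)} {a v : Fin N} {s t : Bool}

/-- The edges, with their pages, of a path drawn on two pages. The path is encoded by the list of
its vertices, each paired with the page of the edge to the next vertex; the page stored with the
last vertex is irrelevant. -/
def pathEdges (Q : List (Fin N × Bool)) : List ((ℕ × ℕ) × Bool) :=
  Q.zipWith (fun p q => ((p.1, q.1), p.2)) Q.tail

/-- The point `v` can be reached from the left of all points on page `s` without crossing `Q`,
because no edge of `Q` on that page passes over it. -/
def Visible (Q : List (Fin N × Bool)) (s : Bool) (v : Fin N) : Prop :=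
  ∀ e ∈ pathEdges Q, e.2 = s → ¬ Covers e.1 v

/-- `Q` is a bichromatic path drawn on two pages without crossings. -/
structure IsTwoPagePath (c : Fin N → Bool) (Q : List (Fin N × Bool)) : Prop where
  bichromatic : Q.IsChain fun p q => c p.1 ≠ c q.1
  noncrossing : (pathEdges Q).Pairwise fun e f => e.2 = f.2 → ¬ Interleaves e.1 f.1

theorem pathEdges_cons (p : Fin N × Bool) (Q : List (Fin N × Bool)) :
    pathEdges (p :: Q) =
      (Q.head?.map fun q => (((p.1 : ℕ), (q.1 : ℕ)), p.2)).toList ++ pathEdges Q := by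
  cases Q <;> rfl

theorem le_min_of_mem_pathEdges {x : ℕ} (hx : ∀ w ∈ Q.map Prod.fst, x ≤ w)
    {e : (ℕ × ℕ) × Bool} (he : e ∈ pathEdges Q) : x ≤ min e.1.1 e.1.2 := by
  obtain ⟨i, hi, rfl⟩ := List.mem_iff_getElem.1 he
  simp only [pathEdges, List.getElem_zipWith, List.getElem_tail]
  exact le_min (hx _ (List.mem_map_of_mem (List.getElem_mem _)))
    (hx _ (List.mem_map_of_mem (List.getElem_mem _)))

theorem getElem_mem_pathEdges (i : ℕ) (hi : i + 1 < Q.length) :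
    ((↑Q[i].1, ↑Q[i + 1].1), Q[i].2) ∈ pathEdges Q := by
  refine List.mem_iff_getElem.2 ⟨i, ?_, ?_⟩
  · simp only [pathEdges, List.length_zipWith, List.length_tail]
    omega
  · simp only [pathEdges, List.getElem_zipWith, List.getElem_tail]

theorem visible_cons :
    Visible ((a, s) :: Q) t v ↔
      (∀ q ∈ Q.head?, s = t → ¬ Covers (a, q.1) v) ∧ Visible Q t v := by
  simp [Visible, pathEdges_cons, or_imp, forall_and]

theorem visible_of_forall_lt (hv : ∀ w ∈ Q.map Prod.fst, v < w) : Visible Q s v := by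
  intro e he _ hcov
  exact absurd hcov.1 (le_min_of_mem_pathEdges (fun w hw => (hv w hw).le) he).not_gt

theorem Visible.cons_cons_of_le {b : Fin N} {s' : Bool} (h : Visible ((a, s) :: Q) t v)
    (hab : a ≤ b) (hbv : b ≤ v) : Visible ((b, s') :: (a, s) :: Q) t v := by
  refine visible_cons.2 ⟨?_, h⟩
  simp only [List.head?_cons, Option.mem_some_iff, forall_eq', Covers]
  omega

namespace IsTwoPagePath

theorem nil : IsTwoPagePath c [] := ⟨.nil, .nil⟩

theorem cons (h : IsTwoPagePath c Q) (hcolor : ∀ q ∈ Q.head?, c a ≠ c q.1)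
    (hcross : ∀ q ∈ Q.head?, ∀ e ∈ pathEdges Q, e.2 = s → ¬ Interleaves (a, q.1) e.1) :
    IsTwoPagePath c ((a, s) :: Q) := by
  refine ⟨h.bichromatic.cons hcolor, ?_⟩
  rw [pathEdges_cons]
  refine List.pairwise_append.2 ⟨by cases Q.head? <;> simp, h.noncrossing, ?_⟩
  simp only [Option.mem_toList, Option.map_eq_some_iff]
  rintro _ ⟨q, hq, rfl⟩ e he hs
  exact hcross q hq e he hs.symm

theorem cons_of_visible_head (h : IsTwoPagePath c Q) (ha : ∀ w ∈ Q.map Prod.fst, a ≤ w)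
    (hcolor : ∀ q ∈ Q.head?, c a ≠ c q.1) (hvis : ∀ q ∈ Q.head?, Visible Q s q.1) :
    IsTwoPagePath c ((a, s) :: Q) :=
  h.cons hcolor fun q hq e he hs hcross =>
    hvis q hq e he hs (hcross.covers_of_le (le_min_of_mem_pathEdges ha he))

theorem cons_of_visible (h : IsTwoPagePath c Q)
    (hhead : ∀ q ∈ Q.head?, ∀ w ∈ Q.map Prod.fst, q.1 ≤ w)
    (hcolor : ∀ q ∈ Q.head?, c a ≠ c q.1) (hvis : Visible Q s a) :
    IsTwoPagePath c ((a, s) :: Q) :=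
  h.cons hcolor fun q hq e he hs hcross =>
    hvis e he hs ((interleaves_swap_left.1 hcross).covers_of_le
      (le_min_of_mem_pathEdges (hhead q hq) he))

theorem not_interleaves (h : IsTwoPagePath c Q) {e f : (ℕ × ℕ) × Bool} (he : e ∈ pathEdges Q)
    (hf : f ∈ pathEdges Q) (hpage : e.2 = f.2) : ¬ Interleaves e.1 f.1 := by
  have : Std.Symm fun e f : (ℕ × ℕ) × Bool => e.2 = f.2 → ¬ Interleaves e.1 f.1 :=
    ⟨fun _ _ hef hfe hcross => hef hfe.symm hcross.symm⟩
  exact h.noncrossing.forall_of_forall (fun e _ _ => not_interleaves_self e.1) he hf hpage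

end IsTwoPagePath

end Path

/-- The number of points of `L` of color `r` minus the number of those of the other color. -/
def colorExcess {α : Type*} (c : α → Bool) (r : Bool) (L : List α) : ℤ :=
  (L.map c).count r - (L.map c).count (!r)

theorem colorExcess_cons {α : Type*} (c : α → Bool) (r : Bool) (x : α) (L : List α) :
    colorExcess c r (x :: L) = colorExcess c r L + if c x = r then 1 else -1 := by
  simp only [colorExcess, List.map_cons, List.count_cons]
  cases c x <;> cases r <;> grind

section Scan

variable {N : ℕ} {c : Fin N → Bool} {r d : Bool} {L P : List (Fin N)} {Q : List (Fin N × Bool)}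
  {x p : Fin N}

/-- The state of the right-to-left scan after the points of `L`: the path `Q`, whose first vertex
is the end to be extended, the pending points `P` and their color `d`. The color `r` is the one
opposite to the last vertex of `Q`; it equals `d` as long as `Q` is empty. -/
structure IsScanState (c : Fin N → Bool) (r : Bool) (L : List (Fin N)) (Q : List (Fin N × Bool))
    (P : List (Fin N)) (d : Bool) : Prop extends IsTwoPagePath c Q where
  perm : (Q.map Prod.fst ++ P).Perm L
  sorted : P.SortedLT
  color_pending : ∀ p ∈ P, c p = d
  color_head : ∀ q ∈ Q.head?, c q.1 = d
  balance : colorExcess c r L = if d = r then (P.length : ℤ) else -(P.length + 1)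
  exists_visible_pending : ∀ p ∈ P, ∃ s, Visible Q s p
  exists_visible_head : ∃ s, ∀ q ∈ Q.head?, Visible Q s q.1
  visible_of_lt_head : ∀ q ∈ Q.head?, ∀ p ∈ P, p < q.1 → ∀ s, Visible Q s p

namespace IsScanState

theorem nil (c : Fin N → Bool) (r : Bool) : IsScanState c r [] [] [] r where
  toIsTwoPagePath := .nil
  perm := .nil
  sorted := List.Pairwise.nil.sortedLT
  color_pending := by simp
  color_head := by simp
  balance := by simp [colorExcess]
  exists_visible_pending := by simp
  exists_visible_head := by simp
  visible_of_lt_head := by simp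

theorem lt_of_mem_path (h : IsScanState c r L Q P d) (hx : ∀ y ∈ L, x < y) :
    ∀ w ∈ Q.map Prod.fst, x < w :=
  fun w hw => hx w (h.perm.subset (List.mem_append_left _ hw))

theorem lt_of_mem_pending (h : IsScanState c r L Q P d) (hx : ∀ y ∈ L, x < y) :
    ∀ p ∈ P, x < p :=
  fun p hp => hx p (h.perm.subset (List.mem_append_right _ hp))

theorem cons_pending (h : IsScanState c r L Q P d) (hx : ∀ y ∈ L, x < y) (hc : c x = d) :
    IsScanState c r (x :: L) Q (x :: P) d where
  toIsTwoPagePath := h.toIsTwoPagePath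
  perm := List.perm_middle.trans (h.perm.cons x)
  sorted := (List.pairwise_cons.2 ⟨h.lt_of_mem_pending hx, h.sorted.pairwise⟩).sortedLT
  color_pending := List.forall_mem_cons.2 ⟨hc, h.color_pending⟩
  color_head := h.color_head
  balance := by
    rw [colorExcess_cons, h.balance, hc, List.length_cons]
    split_ifs <;> push_cast <;> ring
  exists_visible_pending := List.forall_mem_cons.2
    ⟨⟨true, visible_of_forall_lt (h.lt_of_mem_path hx)⟩, h.exists_visible_pending⟩
  exists_visible_head := h.exists_visible_head
  visible_of_lt_head q hq := List.forall_mem_cons.2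
    ⟨fun _ _ => visible_of_forall_lt (h.lt_of_mem_path hx), h.visible_of_lt_head q hq⟩

/-- Pending points under the new edge are visible on the other page, and the new edge does not
affect the remaining ones. -/
theorem exists_visible_cons (h : IsScanState c r L Q P d) (hx : ∀ y ∈ L, x < y) (s : Bool)
    (hp : p ∈ P) : ∃ t, Visible ((x, s) :: Q) t p := by
  have hxp : x < p := h.lt_of_mem_pending hx p hp
  by_cases hlt : ∃ q ∈ Q.head?, p < q.1
  · obtain ⟨q, hq, hpq⟩ := hlt
    exact ⟨!s, visible_cons.2 ⟨by simp, h.visible_of_lt_head q hq p hp hpq _⟩⟩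
  · obtain ⟨t, ht⟩ := h.exists_visible_pending p hp
    refine ⟨t, visible_cons.2 ⟨fun q hq _ hcov => hlt ⟨q, hq, ?_⟩, ht⟩⟩
    simp only [Covers] at hcov
    omega

theorem exists_isTwoPagePath_cons (h : IsScanState c r L Q P d) (hx : ∀ y ∈ L, x < y)
    (hc : c x ≠ d) : ∃ s, IsTwoPagePath c ((x, s) :: Q) := by
  obtain ⟨s, hs⟩ := h.exists_visible_head
  exact ⟨s, h.cons_of_visible_head (fun w hw => (h.lt_of_mem_path hx w hw).le)
    (fun q hq => (h.color_head q hq).symm ▸ hc) hs⟩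

theorem cons_of_pending_nil (h : IsScanState c r L Q [] d) (hx : ∀ y ∈ L, x < y)
    (hc : c x ≠ d) : ∃ s, IsScanState c r (x :: L) ((x, s) :: Q) [] (c x) := by
  obtain ⟨s, hpath⟩ := h.exists_isTwoPagePath_cons hx hc
  have hx_visible : Visible ((x, s) :: Q) s x := visible_cons.2
    ⟨fun q _ _ hcov => by simp only [Covers] at hcov; omega,
      visible_of_forall_lt (h.lt_of_mem_path hx)⟩
  exact ⟨s, {
    toIsTwoPagePath := hpath
    perm := h.perm.cons x
    sorted := List.Pairwise.nil.sortedLT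
    color_pending := by simp
    color_head := by simp
    balance := by
      rw [colorExcess_cons, h.balance, Bool.eq_not_of_ne hc]
      cases d <;> cases r <;> simp
    exists_visible_pending := by simp
    exists_visible_head := ⟨s, by simpa using hx_visible⟩
    visible_of_lt_head := by simp }⟩

theorem cons_of_pending_cons (h : IsScanState c r L Q (p :: P) d) (hx : ∀ y ∈ L, x < y)
    (hc : c x ≠ d) : ∃ s t, IsScanState c r (x :: L) ((p, t) :: (x, s) :: Q) P d := by
  obtain ⟨s, hpath⟩ := h.exists_isTwoPagePath_cons hx hc
  obtain ⟨t, hp_visible⟩ := h.exists_visible_cons hx s List.mem_cons_self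
  have hxp : x < p := h.lt_of_mem_pending hx p List.mem_cons_self
  have hcp : c p = d := h.color_pending p List.mem_cons_self
  have hpP : ∀ p' ∈ P, p < p' := (List.pairwise_cons.1 h.sorted.pairwise).1
  have hx_le : ∀ w ∈ ((x, s) :: Q).map Prod.fst, x ≤ w :=
    List.forall_mem_cons.2 ⟨le_rfl, fun w hw => (h.lt_of_mem_path hx w hw).le⟩
  exact ⟨s, t, {
    toIsTwoPagePath := hpath.cons_of_visible (by
      simpa only [List.head?_cons, Option.mem_some_iff, forall_eq'] using hx_le)
      (by simpa [hcp] using Ne.symm hc) hp_visible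
    perm := (List.Perm.swap x p _).trans ((List.perm_middle.symm.trans h.perm).cons x)
    sorted := (List.pairwise_cons.1 h.sorted.pairwise).2.sortedLT
    color_pending := fun p' hp' => h.color_pending p' (List.mem_cons_of_mem _ hp')
    color_head := by simpa using hcp
    balance := by
      rw [colorExcess_cons, h.balance, List.length_cons, Bool.eq_not_of_ne hc]
      cases d <;> cases r <;> simp
    exists_visible_pending := fun p' hp' =>
      (h.exists_visible_cons hx s (List.mem_cons_of_mem _ hp')).imp
        fun _ hvis => hvis.cons_cons_of_le hxp.le (hpP p' hp').le
    exists_visible_head := ⟨t, by simpa using hp_visible.cons_cons_of_le hxp.le le_rfl⟩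
    visible_of_lt_head := by
      simp only [List.head?_cons, Option.mem_some_iff, forall_eq']
      exact fun p' hp' hlt => absurd hlt (hpP p' hp').not_gt }⟩

theorem exists_of_sortedLT (c : Fin N → Bool) (r : Bool) (hL : L.SortedLT) :
    ∃ Q P d, IsScanState c r L Q P d := by
  induction L with
  | nil => exact ⟨[], [], r, nil c r⟩
  | cons x L ih =>
    obtain ⟨hx, hL⟩ := List.pairwise_cons.1 hL.pairwise
    obtain ⟨Q, P, d, h⟩ := ih hL.sortedLT
    by_cases hc : c x = d
    · exact ⟨_, _, _, h.cons_pending hx hc⟩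
    · cases P with
      | nil =>
        obtain ⟨s, h'⟩ := h.cons_of_pending_nil hx hc
        exact ⟨_, _, _, h'⟩
      | cons p P =>
        obtain ⟨s, t, h'⟩ := h.cons_of_pending_cons hx hc
        exact ⟨_, _, _, h'⟩

end IsScanState

theorem exists_isTwoPagePath_of_balanced (c : Fin N → Bool) (hL : L.SortedLT)
    (hbal : (L.map c).count true = (L.map c).count false) :
    ∃ Q, (Q.map Prod.fst).Perm L ∧ (Q.map Prod.fst).head? = L.head? ∧ IsTwoPagePath c Q := by
  cases L with
  | nil => exact ⟨[], .nil, rfl, .nil⟩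
  | cons x L =>
    obtain ⟨hx, hL⟩ := List.pairwise_cons.1 hL.pairwise
    obtain ⟨Q, P, d, h⟩ := IsScanState.exists_of_sortedLT c (c x) hL.sortedLT
    have hzero : colorExcess c (c x) (x :: L) = 0 := by
      rw [colorExcess]
      cases c x <;> simp only [Bool.not_true, Bool.not_false, hbal, sub_self]
    have hbalance := h.balance
    have hcons := colorExcess_cons c (c x) x L
    rw [if_pos rfl] at hcons
    have hd : c x ≠ d := by
      intro hd
      rw [if_pos hd.symm] at hbalance
      omega
    obtain rfl : P = [] := by
      rw [if_neg hd.symm] at hbalance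
      exact List.length_eq_zero_iff.1 (by omega)
    obtain ⟨s, h'⟩ := h.cons_of_pending_nil hx hd
    exact ⟨(x, s) :: Q, by simpa using h'.perm, rfl, h'.toIsTwoPagePath⟩

end Scan

theorem count_map_finRange {N : ℕ} {α : Type*} [DecidableEq α] (c : Fin N → α) (b : α) :
    ((List.finRange N).map c).count b = (Finset.univ.filter fun i => c i = b).card := by
  rw [List.count, List.countP_map, List.countP_eq_length_filter, Fin.univ_def]
  simp [Finset.card, Finset.filter, Function.comp_def, beq_eq_decide]

theorem bijective_getElem_of_perm_finRange {N : ℕ} {l : List (Fin N)}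
    (h : l.Perm (List.finRange N)) :
    Function.Bijective fun i : Fin N => l[i]'(by simp [h.length_eq]) := by
  refine Finite.injective_iff_bijective.1 fun i j hij => Fin.ext ?_
  exact ((h.nodup_iff.2 (List.nodup_finRange N)).getElem_inj_iff).1 hij

/-- For every balanced 2-coloring of `2n` collinear points there is a non-crossing
bichromatic Hamiltonian path drawn on two pages. -/
theorem noncrossing_bichromatic_hamiltonian_path_from_leftmost_exists
    (n : ℕ) (hn : 1 ≤ n) (c : Fin (2 * n) → Bool)
    (hbal : (Finset.univ.filter (fun i => c i = true)).card = n) :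
    ∃ v : Fin (2 * n) → Fin (2 * n), Function.Bijective v ∧
      v ⟨0, by omega⟩ = ⟨0, by omega⟩ ∧
      (∀ i : Fin (2 * n - 1),
        c (v ⟨i.val, by have := i.isLt; omega⟩) ≠
        c (v ⟨i.val + 1, by have := i.isLt; omega⟩)) ∧
      ∃ σ : Fin (2 * n - 1) → Bool,
        ∀ i j : Fin (2 * n - 1), σ i = σ j →
          ¬ Interleaves
              (((v ⟨i.val, by have := i.isLt; omega⟩) : ℕ),
               ((v ⟨i.val + 1, by have := i.isLt; omega⟩) : ℕ))
              (((v ⟨j.val, by have := j.isLt; omega⟩) : ℕ),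
               ((v ⟨j.val + 1, by have := j.isLt; omega⟩) : ℕ)) := by
  have hred : ((List.finRange (2 * n)).map c).count true = n := by rw [count_map_finRange, hbal]
  have hblue : ((List.finRange (2 * n)).map c).count false = n := by
    have := ((List.finRange (2 * n)).map c).count_true_add_count_false
    rw [List.length_map, List.length_finRange] at this
    omega
  obtain ⟨Q, hperm, hhead, hQ⟩ := exists_isTwoPagePath_of_balanced c
    (List.sortedLT_finRange (2 * n)) (hred.trans hblue.symm)
  have hlen : Q.length = 2 * n := by simpa using hperm.length_eq
  refine ⟨fun i => Q[i].1, ?_, ?_, fun i => ?_, fun i => Q[i.val].2, fun i j hij => ?_⟩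
  · simpa using bijective_getElem_of_perm_finRange hperm
  · simpa [List.head?_eq_getElem?, hlen, show 0 < n from hn] using hhead
  · exact List.isChain_iff_getElem.1 hQ.bichromatic i (by omega)
  · exact hQ.not_interleaves (getElem_mem_pathEdges i (by omega))
      (getElem_mem_pathEdges j (by omega)) hij
end

section
/- Let c be a balanced coloring of the 2n collinear points with strictly increasing positions x : Fin (2n) → ℝ. Then there exists exactly one minimum-weight non-crossing perfect bichromatic matching, i.e., there is a unique non-crossing perfect bichromatic matching M such that every non-crossing perfect bichromatic matching M' ≠ M has strictly larger total weight. -/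
/-- `M` is a non-crossing perfect bichromatic matching of the `N` collinear points:
its elements are pairs `(a, b)` with `a < b` of differently colored points, every
point belongs to exactly one pair, and no two pairs interleave. -/
def IsNCMatching {N : ℕ} (c : Fin N → Bool) (M : Finset (Fin N × Fin N)) : Prop :=
  (∀ p ∈ M, p.1 < p.2 ∧ c p.1 ≠ c p.2) ∧
  (∀ i : Fin N, ∃! p, p ∈ M ∧ (i = p.1 ∨ i = p.2)) ∧
  (∀ p ∈ M, ∀ q ∈ M, p ≠ q →
    ¬ Interleaves (((p.1 : ℕ)), ((p.2 : ℕ))) (((q.1 : ℕ)), ((q.2 : ℕ))))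

/-- The total weight of a matching: each pair weighs the distance between the
positions of its endpoints. -/
def matchingWeight {N : ℕ} (x : Fin N → ℝ) (M : Finset (Fin N × Fin N)) : ℝ :=
  ∑ p ∈ M, |x p.2 - x p.1|

/-!
Let `h k` be the number of red minus the number of blue points among the first `k`. Every edge
of a bichromatic matching covering the gap before point `k` contributes `±1` to `h k`, and all
other edges contribute `0`, so at least `|h k|` edges cover that gap. The weight of a matching is
the sum of the gap lengths, each multiplied by the number of edges covering it.

A perfect non-crossing matching is determined by its cover counts: its edges are the excursions of
the cover count, just as a Dyck path determines its matching of parentheses. Since `|h|` is a Dyck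
path, its excursions form a non-crossing matching with cover count exactly `|h|`. This matching is
bichromatic because `h` keeps its sign during an excursion of `|h|`, and any other non-crossing
matching covers some gap more often.
-/

section

open Finset

variable {N : ℕ} {M M' : Finset (Fin N × Fin N)}

/-- A perfect matching of `Fin N`, colors disregarded, with every edge listed as `(a, b)` where
`a < b`. -/
structure IsPerfectMatching (M : Finset (Fin N × Fin N)) : Prop where
  fst_lt_snd : ∀ p ∈ M, p.1 < p.2
  existsUnique_edge : ∀ i : Fin N, ∃! p, p ∈ M ∧ (i = p.1 ∨ i = p.2)

/-- No two edges interleave. Quantifying over ordered pairs of edges, it suffices to exclude the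
case in which the first edge starts first. -/
def IsNonCrossing (M : Finset (Fin N × Fin N)) : Prop :=
  ∀ p ∈ M, ∀ q ∈ M, ¬(p.1 < q.1 ∧ q.1 < p.2 ∧ p.2 < q.2)

lemma interleaves_iff {p q : ℕ × ℕ} (hp : p.1 ≤ p.2) (hq : q.1 ≤ q.2) :
    Interleaves p q ↔
      (p.1 < q.1 ∧ q.1 < p.2 ∧ p.2 < q.2) ∨ (q.1 < p.1 ∧ p.1 < q.2 ∧ q.2 < p.2) := by
  simp only [Interleaves, min_eq_left hp, min_eq_left hq, max_eq_right hp, max_eq_right hq]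

lemma isNCMatching_iff {c : Fin N → Bool} :
    IsNCMatching c M ↔ IsPerfectMatching M ∧ IsNonCrossing M ∧ ∀ p ∈ M, c p.1 ≠ c p.2 := by
  constructor
  · rintro ⟨hedge, hcover, hcross⟩
    refine ⟨⟨fun p hp => (hedge p hp).1, hcover⟩, fun p hp q hq hpq => ?_,
      fun p hp => (hedge p hp).2⟩
    have hne : p ≠ q := by rintro rfl; exact hpq.1.false
    exact hcross p hp q hq hne
      ((interleaves_iff (hedge p hp).1.le (hedge q hq).1.le).2 (Or.inl hpq))
  · rintro ⟨hM, hcross, hcolor⟩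
    refine ⟨fun p hp => ⟨hM.fst_lt_snd p hp, hcolor p hp⟩, hM.existsUnique_edge,
      fun p hp q hq _ hpq => ?_⟩
    rcases (interleaves_iff (hM.fst_lt_snd p hp).le (hM.fst_lt_snd q hq).le).1 hpq with h | h
    · exact hcross p hp q hq h
    · exact hcross q hq p hp h

namespace IsPerfectMatching

lemma eq_of_common_endpoint (hM : IsPerfectMatching M) {p q : Fin N × Fin N} {i : Fin N}
    (hp : p ∈ M) (hq : q ∈ M) (hip : i = p.1 ∨ i = p.2) (hiq : i = q.1 ∨ i = q.2) : p = q :=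
  (hM.existsUnique_edge i).unique ⟨hp, hip⟩ ⟨hq, hiq⟩

lemma eq_of_subset (hM : IsPerfectMatching M)
    (hM' : ∀ p ∈ M', ∀ q ∈ M', ∀ i, (i = p.1 ∨ i = p.2) → (i = q.1 ∨ i = q.2) → p = q)
    (h : M ⊆ M') : M = M' := by
  refine h.antisymm fun p hp => ?_
  obtain ⟨q, ⟨hq, hpq⟩, -⟩ := hM.existsUnique_edge p.1
  rwa [hM' p hp q (h hq) p.1 (Or.inl rfl) hpq]

lemma sum_eq_sum_endpoints {A : Type*} [AddCommMonoid A] (hM : IsPerfectMatching M)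
    (f : Fin N → A) : ∑ i, f i = ∑ p ∈ M, (f p.1 + f p.2) := by
  have hunion : (univ : Finset (Fin N)) = M.biUnion fun p => {p.1, p.2} := by
    ext i
    simpa using (hM.existsUnique_edge i).exists
  have hdisj : (M : Set (Fin N × Fin N)).PairwiseDisjoint
      fun p => ({p.1, p.2} : Finset (Fin N)) := by
    refine fun p hp q hq hpq => disjoint_left.2 fun i hip hiq => hpq ?_
    exact hM.eq_of_common_endpoint hp hq (by simpa using hip) (by simpa using hiq)
  rw [hunion, sum_biUnion hdisj]
  exact sum_congr rfl fun p hp => sum_pair (hM.fst_lt_snd p hp).ne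

end IsPerfectMatching

/-- The edges of `M` covering the gap before the point `k`, i.e. the gap between `k - 1` and `k`. -/
def coveringEdges (M : Finset (Fin N × Fin N)) (k : ℕ) : Finset (Fin N × Fin N) :=
  {p ∈ M | (p.1 : ℕ) < k ∧ k ≤ p.2}

lemma mem_coveringEdges {p : Fin N × Fin N} {k : ℕ} :
    p ∈ coveringEdges M k ↔ p ∈ M ∧ (p.1 : ℕ) < k ∧ k ≤ p.2 :=
  mem_filter

/-- The number of edges of `M` covering the gap before the point `k`. As a function of `k` it is
the Dyck path attached to a perfect matching. -/
def coverCount (M : Finset (Fin N × Fin N)) (k : ℕ) : ℕ :=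
  #(coveringEdges M k)

lemma coverCount_eq_zero_of_le {k : ℕ} (hk : N ≤ k) : coverCount M k = 0 := by
  rw [coverCount, card_eq_zero, coveringEdges, filter_eq_empty_iff]
  omega

lemma matchingWeight_eq_sum_gap_mul_coverCount {X : ℕ → ℝ} (hX : Monotone fun i : Fin N => X i)
    (hM : ∀ p ∈ M, p.1 ≤ p.2) :
    matchingWeight (fun i => X i) M =
      ∑ k ∈ range (N - 1), (X (k + 1) - X k) * coverCount M (k + 1) := by
  have hedge : ∀ p ∈ M, |X p.2 - X p.1| =
      ∑ k ∈ range (N - 1), if (p.1 : ℕ) < k + 1 ∧ k + 1 ≤ p.2 then X (k + 1) - X k else 0 := by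
    intro p hp
    have hgaps : {k ∈ range (N - 1) | (p.1 : ℕ) < k + 1 ∧ k + 1 ≤ p.2} = Ico (p.1 : ℕ) p.2 := by
      ext k
      simp only [mem_filter, mem_range, mem_Ico]
      omega
    rw [← sum_filter, hgaps, sum_Ico_sub X (hM p hp), abs_of_nonneg (sub_nonneg.2 (hX (hM p hp)))]
  rw [matchingWeight, sum_congr rfl hedge, sum_comm]
  refine sum_congr rfl fun k _ => ?_
  rw [← sum_filter, sum_const, nsmul_eq_mul, mul_comm, coverCount, coveringEdges]

lemma matchingWeight_lt_of_coverCount_lt {x : Fin N → ℝ} (hx : StrictMono x)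
    (hM : ∀ p ∈ M, p.1 ≤ p.2) (hM' : ∀ p ∈ M', p.1 ≤ p.2) (h : coverCount M < coverCount M') :
    matchingWeight x M < matchingWeight x M' := by
  obtain ⟨X, rfl⟩ : ∃ X : ℕ → ℝ, x = fun i : Fin N => X i :=
    ⟨Function.extend Fin.val x 0, funext fun i => (Fin.val_injective.extend_apply x 0 i).symm⟩
  have hgap : ∀ k ∈ range (N - 1), 0 < X (k + 1) - X k := fun k hk => by
    have hkN : k + 1 < N := by rw [mem_range] at hk; omega
    exact sub_pos.2 (@hx ⟨k, by omega⟩ ⟨k + 1, hkN⟩ (Nat.lt_succ_self k))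
  obtain ⟨hle, k, hk⟩ := Pi.lt_def.1 h
  obtain ⟨p, hp⟩ := card_pos.1 (Nat.zero_lt_of_lt hk)
  obtain ⟨-, hpk, hkp⟩ := mem_coveringEdges.1 hp
  obtain ⟨j, rfl⟩ := Nat.exists_eq_succ_of_ne_zero (Nat.ne_zero_of_lt hpk)
  have hj : j ∈ range (N - 1) := mem_range.2 (by omega)
  rw [matchingWeight_eq_sum_gap_mul_coverCount hx.monotone hM,
    matchingWeight_eq_sum_gap_mul_coverCount hx.monotone hM']
  refine sum_lt_sum (fun i hi => ?_) ⟨j, hj, ?_⟩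
  · exact mul_le_mul_of_nonneg_left (Nat.cast_le.2 (hle (i + 1))) (hgap i hi).le
  · exact mul_lt_mul_of_pos_left (Nat.cast_lt.2 hk) (hgap j hj)

section PrefixSum

variable {A : Type*} [AddCommMonoid A]

/-- The sum of the values of `t` at the first `k` points; for `N ≤ k` this is the total sum. -/
def prefixSum (t : Fin N → A) (k : ℕ) : A :=
  ∑ i ∈ {i : Fin N | (i : ℕ) < k}, t i

lemma prefixSum_zero (t : Fin N → A) : prefixSum t 0 = 0 := by
  simp [prefixSum]

lemma prefixSum_of_le (t : Fin N → A) {k : ℕ} (hk : N ≤ k) : prefixSum t k = ∑ i, t i := by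
  rw [prefixSum, filter_true_of_mem fun i _ => i.isLt.trans_le hk]

lemma prefixSum_succ (t : Fin N → A) (i : Fin N) : prefixSum t (i + 1) = prefixSum t i + t i := by
  have hinsert : univ.filter (fun j : Fin N => (j : ℕ) < i + 1) =
      insert i (univ.filter fun j : Fin N => (j : ℕ) < i) := by
    ext j
    simp only [mem_filter, mem_univ, true_and, mem_insert, Fin.ext_iff]
    omega
  rw [prefixSum, hinsert, sum_insert (by simp), add_comm, prefixSum]

end PrefixSum

section AddCommGroup

variable {A : Type*} [AddCommGroup A]

lemma prefixSum_sub (g : ℕ → A) {k : ℕ} (hk : k ≤ N) :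
    prefixSum (fun i : Fin N => g (i + 1) - g i) k = g k - g 0 := by
  induction k with
  | zero => rw [prefixSum_zero, sub_self]
  | succ k ih => rw [prefixSum_succ _ ⟨k, hk⟩, ih (by omega)]; abel

lemma IsPerfectMatching.prefixSum_eq_sum_coveringEdges (hM : IsPerfectMatching M)
    {t : Fin N → A} (ht : ∀ p ∈ M, t p.2 = -t p.1) (k : ℕ) :
    prefixSum t k = ∑ p ∈ coveringEdges M k, t p.1 := by
  rw [prefixSum, sum_filter, hM.sum_eq_sum_endpoints, coveringEdges, sum_filter]
  refine sum_congr rfl fun p hp => ?_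
  have hlt : (p.1 : ℕ) < p.2 := hM.fst_lt_snd p hp
  rw [ht p hp]
  split_ifs <;> first | omega | simp

end AddCommGroup

section Excursion

variable {α : Type*} [Preorder α] {g : ℕ → α}

/-- The path `g` rises on step `i`, falls on step `j`, and in between stays strictly above its
level at `i`: steps `i` and `j` are matching parentheses. Step `k` leads from `g k` to
`g (k + 1)`. -/
structure IsExcursion (g : ℕ → α) (i j : ℕ) : Prop where
  lt : i < j
  eq : g i = g (j + 1)
  above : ∀ k ∈ Set.Ioc i j, g i < g k

namespace IsExcursion

lemma right_unique {i j j' : ℕ} (h : IsExcursion g i j) (h' : IsExcursion g i j') : j = j' := by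
  rcases lt_trichotomy j j' with hlt | heq | hgt
  · exact absurd h.eq (h'.above (j + 1) ⟨h.lt.trans (Nat.lt_succ_self j), hlt⟩).ne
  · exact heq
  · exact absurd h'.eq (h.above (j' + 1) ⟨h'.lt.trans (Nat.lt_succ_self j'), hgt⟩).ne

lemma nested {i j k l : ℕ} (h : IsExcursion g i j) (h' : IsExcursion g k l) (hik : i < k)
    (hkj : k ≤ j) : l < j := by
  by_contra! hjl
  have hgik : g i < g k := h.above k ⟨hik, hkj⟩
  rcases hjl.eq_or_lt with rfl | hjl
  · exact hgik.ne (h.eq.trans h'.eq.symm)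
  · exact (hgik.trans (h'.above (j + 1) ⟨Nat.lt_succ_of_le hkj, hjl⟩)).ne h.eq

lemma left_unique {i i' j : ℕ} (h : IsExcursion g i j) (h' : IsExcursion g i' j) : i = i' := by
  rcases lt_trichotomy i i' with hlt | heq | hgt
  · exact absurd (h.nested h' hlt h'.lt.le) (lt_irrefl j)
  · exact heq
  · exact absurd (h'.nested h hgt h.lt.le) (lt_irrefl j)

lemma right_ne_left {i j k l : ℕ} (h : IsExcursion g i j) (h' : IsExcursion g k l) : j ≠ k := by
  rintro rfl
  exact (h.nested h' h.lt le_rfl).asymm h'.lt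

end IsExcursion

/-- The pairs of matching parentheses of the first `N` steps of `g`. -/
noncomputable def excursionMatching (N : ℕ) (g : ℕ → α) : Finset (Fin N × Fin N) :=
  open Classical in {p | IsExcursion g p.1 p.2}

lemma mem_excursionMatching {p : Fin N × Fin N} :
    p ∈ excursionMatching N g ↔ IsExcursion g p.1 p.2 := by
  simp [excursionMatching]

lemma isNonCrossing_excursionMatching (g : ℕ → α) : IsNonCrossing (excursionMatching N g) := by
  rintro p hp q hq ⟨hpq, hqp, hlt⟩
  rw [mem_excursionMatching] at hp hq
  exact hlt.asymm (hp.nested hq hpq hqp.le)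

lemma eq_of_common_endpoint_of_mem_excursionMatching {p q : Fin N × Fin N} {i : Fin N}
    (hp : p ∈ excursionMatching N g) (hq : q ∈ excursionMatching N g) (hip : i = p.1 ∨ i = p.2)
    (hiq : i = q.1 ∨ i = q.2) : p = q := by
  obtain ⟨a, b⟩ := p
  obtain ⟨a', b'⟩ := q
  rw [mem_excursionMatching] at hp hq
  rcases hip with rfl | rfl <;> rcases hiq with rfl | rfl
  · exact Prod.ext rfl (Fin.ext (hp.right_unique hq))
  · exact absurd rfl (hq.right_ne_left hp)
  · exact absurd rfl (hp.right_ne_left hq)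
  · exact Prod.ext (Fin.ext (hp.left_unique hq)) rfl

end Excursion

section CoverCount

variable {p : Fin N × Fin N}

lemma coveringEdges_fst (hM : IsPerfectMatching M) (hcross : IsNonCrossing M) (hp : p ∈ M) :
    coveringEdges M p.1 = {q ∈ M | q.1 < p.1 ∧ p.2 < q.2} := by
  refine filter_congr fun q hq => ⟨fun ⟨hqp, hpq⟩ => ⟨hqp, ?_⟩, fun ⟨hqp, hpq⟩ => ⟨hqp, ?_⟩⟩
  · have hne : q ≠ p := by rintro rfl; exact lt_irrefl _ hqp
    have hpq' : p.1 < q.2 := lt_of_le_of_ne hpq fun h =>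
      hne (hM.eq_of_common_endpoint hq hp (Or.inr h) (Or.inl rfl))
    refine lt_of_le_of_ne (not_lt.1 fun h => hcross q hq p hp ⟨hqp, hpq', h⟩) fun h => ?_
    exact hne (hM.eq_of_common_endpoint hq hp (Or.inr h) (Or.inr rfl))
  · exact ((hM.fst_lt_snd p hp).trans hpq).le

lemma coveringEdges_snd_succ (hM : IsPerfectMatching M) (hcross : IsNonCrossing M) (hp : p ∈ M) :
    coveringEdges M (p.2 + 1) = {q ∈ M | q.1 < p.1 ∧ p.2 < q.2} := by
  refine filter_congr fun q hq => ⟨fun ⟨hqp, hpq⟩ => ⟨?_, hpq⟩, fun ⟨hqp, hpq⟩ => ⟨?_, hpq⟩⟩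
  · have hne : q ≠ p := by rintro rfl; exact Nat.not_succ_le_self _ hpq
    have hqp' : q.1 < p.2 := lt_of_le_of_ne (Nat.lt_succ_iff.1 hqp) fun h =>
      hne (hM.eq_of_common_endpoint hq hp (Or.inl h.symm) (Or.inr rfl))
    refine lt_of_le_of_ne (not_lt.1 fun h => hcross p hp q hq ⟨h, hqp', hpq⟩) fun h => ?_
    exact hne (hM.eq_of_common_endpoint hq hp (Or.inl rfl) (Or.inl h))
  · exact Nat.lt_succ_of_lt (hqp.trans (hM.fst_lt_snd p hp))

lemma isExcursion_coverCount (hM : IsPerfectMatching M) (hcross : IsNonCrossing M) (hp : p ∈ M) :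
    IsExcursion (coverCount M) p.1 p.2 where
  lt := hM.fst_lt_snd p hp
  eq := by rw [coverCount, coverCount, coveringEdges_fst hM hcross hp,
    coveringEdges_snd_succ hM hcross hp]
  above k hk := by
    refine card_lt_card (ssubset_iff_of_subset ?_ |>.2 ⟨p, ?_, ?_⟩)
    · intro q hq
      rw [coveringEdges_fst hM hcross hp, mem_filter] at hq
      obtain ⟨hq, hqp, hpq⟩ := hq
      exact mem_coveringEdges.2 ⟨hq, lt_trans hqp hk.1, hk.2.trans (le_of_lt hpq)⟩
    · exact mem_coveringEdges.2 ⟨hp, hk⟩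
    · simp [mem_coveringEdges]

lemma eq_excursionMatching_coverCount (hM : IsPerfectMatching M) (hcross : IsNonCrossing M) :
    M = excursionMatching N (coverCount M) :=
  hM.eq_of_subset
    (fun _ hp _ hq _ => eq_of_common_endpoint_of_mem_excursionMatching hp hq)
    fun _ hp => mem_excursionMatching.2 (isExcursion_coverCount hM hcross hp)

end CoverCount

/-- The height function of a Dyck path with `N` steps, continued by `0` after its end. -/
structure IsDyckPath (N : ℕ) (g : ℕ → ℕ) : Prop where
  zero : g 0 = 0
  eq_zero_of_le : ∀ k, N ≤ k → g k = 0
  step : ∀ k < N, g (k + 1) = g k + 1 ∨ g k = g (k + 1) + 1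

namespace IsDyckPath

variable {g : ℕ → ℕ} {i j : ℕ}

lemma exists_isExcursion_of_rise (hg : IsDyckPath N g) (hi : i < N) (hrise : g (i + 1) = g i + 1) :
    ∃ j < N, IsExcursion g i j := by
  classical
  have hreturn : ∃ j, i < j ∧ g (j + 1) ≤ g i :=
    ⟨N, hi, by rw [hg.eq_zero_of_le (N + 1) N.le_succ]; exact Nat.zero_le _⟩
  obtain ⟨hij, hle⟩ := Nat.find_spec hreturn
  set j := Nat.find hreturn
  have habove : ∀ k ∈ Set.Ioc i j, g i < g k := by
    rintro k ⟨hik, hkj⟩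
    obtain ⟨k, rfl⟩ := Nat.exists_eq_succ_of_ne_zero (Nat.ne_zero_of_lt hik)
    rcases (Nat.lt_succ_iff.1 hik).eq_or_lt with rfl | hik
    · exact hrise.symm ▸ Nat.lt_succ_self (g i)
    · exact not_le.1 fun h => Nat.find_min hreturn hkj ⟨hik, h⟩
  have hgj : g i < g j := habove j ⟨hij, le_rfl⟩
  have hj : j < N := not_le.1 fun h => by have := hg.eq_zero_of_le j h; omega
  have := hg.step j hj
  exact ⟨j, hj, hij, by omega, habove⟩

lemma exists_isExcursion_of_fall (hg : IsDyckPath N g) (hj : j < N) (hfall : g j = g (j + 1) + 1) :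
    ∃ i, IsExcursion g i j := by
  set i := Nat.findGreatest (fun i => g i ≤ g (j + 1)) j
  have hle : g i ≤ g (j + 1) :=
    Nat.findGreatest_spec (P := fun i => g i ≤ g (j + 1)) (Nat.zero_le j)
      (hg.zero.trans_le (Nat.zero_le _))
  have habove : ∀ k ∈ Set.Ioc i j, g (j + 1) < g k := fun k hk =>
    not_le.1 (Nat.findGreatest_is_greatest (P := fun i => g i ≤ g (j + 1)) hk.1 hk.2)
  have hij : i < j := lt_of_le_of_ne (Nat.findGreatest_le j) fun h => by rw [h] at hle; omega
  have heq : g i = g (j + 1) := by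
    have := habove (i + 1) ⟨Nat.lt_succ_self i, hij⟩
    have := hg.step i (hij.trans hj)
    omega
  exact ⟨i, hij, heq, fun k hk => heq.trans_lt (habove k hk)⟩

lemma isPerfectMatching_excursionMatching (hg : IsDyckPath N g) :
    IsPerfectMatching (excursionMatching N g) where
  fst_lt_snd p hp := (mem_excursionMatching.1 hp).lt
  existsUnique_edge i := by
    obtain ⟨p, hp, hip⟩ : ∃ p ∈ excursionMatching N g, i = p.1 ∨ i = p.2 := by
      rcases hg.step i i.isLt with hrise | hfall
      · obtain ⟨j, hj, hij⟩ := hg.exists_isExcursion_of_rise i.isLt hrise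
        exact ⟨(i, ⟨j, hj⟩), mem_excursionMatching.2 hij, Or.inl rfl⟩
      · obtain ⟨j, hji⟩ := hg.exists_isExcursion_of_fall i.isLt hfall
        exact ⟨(⟨j, hji.lt.trans i.isLt⟩, i), mem_excursionMatching.2 hji, Or.inr rfl⟩
    exact ⟨p, ⟨hp, hip⟩, fun q hq =>
      eq_of_common_endpoint_of_mem_excursionMatching hq.1 hp hq.2 hip⟩

lemma rise_and_fall (hg : IsDyckPath N g) (h : IsExcursion g i j) (hj : j < N) :
    g (i + 1) = g i + 1 ∧ g j = g (j + 1) + 1 := by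
  have hi := h.above (i + 1) ⟨Nat.lt_succ_self i, h.lt⟩
  have hj' := h.above j ⟨h.lt, le_rfl⟩
  rw [h.eq] at hj'
  exact ⟨(hg.step i (h.lt.trans hj)).resolve_right (by omega),
    (hg.step j hj).resolve_left (by omega)⟩

lemma coverCount_excursionMatching (hg : IsDyckPath N g) :
    coverCount (excursionMatching N g) = g := by
  funext k
  rcases le_total N k with hk | hk
  · rw [coverCount_eq_zero_of_le hk, hg.eq_zero_of_le k hk]
  have hsteps : ∀ p ∈ excursionMatching N g, g (p.1 + 1) = g p.1 + 1 ∧ g p.2 = g (p.2 + 1) + 1 :=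
    fun p hp => hg.rise_and_fall (mem_excursionMatching.1 hp) p.2.isLt
  have hincrements : (g k : ℤ) - g 0 =
      ∑ p ∈ coveringEdges (excursionMatching N g) k, ((g (p.1 + 1) : ℤ) - g p.1) := by
    rw [← prefixSum_sub (fun m => (g m : ℤ)) hk]
    refine hg.isPerfectMatching_excursionMatching.prefixSum_eq_sum_coveringEdges
      (fun p hp => ?_) k
    have := hsteps p hp
    omega
  have hones : ∀ p ∈ coveringEdges (excursionMatching N g) k,
      (g (p.1 + 1) : ℤ) - g p.1 = 1 := fun p hp => by
    have := (hsteps p (mem_coveringEdges.1 hp).1).1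
    omega
  rw [sum_congr rfl hones, sum_const, nsmul_one, hg.zero, Nat.cast_zero, sub_zero] at hincrements
  exact_mod_cast hincrements.symm

end IsDyckPath

/-- Red points count `1` and blue points `-1`. -/
def colorSign (b : Bool) : ℤ :=
  if b then 1 else -1

lemma colorSign_eq_one_or_neg_one (b : Bool) : colorSign b = 1 ∨ colorSign b = -1 := by
  cases b <;> simp [colorSign]

lemma colorSign_eq_neg_iff {a b : Bool} : colorSign a = -colorSign b ↔ a ≠ b := by
  cases a <;> cases b <;> simp [colorSign]

/-- The number of red minus the number of blue points among the first `k` points. -/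
def height (c : Fin N → Bool) (k : ℕ) : ℤ :=
  prefixSum (fun i => colorSign (c i)) k

lemma height_succ (c : Fin N → Bool) (i : Fin N) :
    height c (i + 1) = height c i + colorSign (c i) :=
  prefixSum_succ _ i

lemma height_step (c : Fin N → Bool) {k : ℕ} (hk : k < N) :
    height c (k + 1) = height c k + 1 ∨ height c (k + 1) = height c k - 1 := by
  have hsucc : height c (k + 1) = height c k + colorSign (c ⟨k, hk⟩) := height_succ c ⟨k, hk⟩
  rcases colorSign_eq_one_or_neg_one (c ⟨k, hk⟩) with h | h <;> omega

lemma sum_colorSign_eq (c : Fin N → Bool) :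
    ∑ i, colorSign (c i) = 2 * (#{i | c i = true} : ℤ) - N := by
  have hsign : ∀ i, colorSign (c i) = 2 * (if c i = true then 1 else 0) - 1 := fun i => by
    cases c i <;> simp [colorSign]
  rw [sum_congr rfl fun i _ => hsign i, sum_sub_distrib, ← mul_sum, sum_boole]
  simp

lemma natAbs_height_le_coverCount {c : Fin N → Bool} (hM : IsPerfectMatching M)
    (hc : ∀ p ∈ M, c p.1 ≠ c p.2) (k : ℕ) : (height c k).natAbs ≤ coverCount M k := by
  have habs : ∀ p ∈ coveringEdges M k, |colorSign (c p.1)| = 1 := fun p _ => by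
    rcases colorSign_eq_one_or_neg_one (c p.1) with h | h <;> simp [h]
  have hle : |height c k| ≤ coverCount M k :=
    calc |height c k| = |∑ p ∈ coveringEdges M k, colorSign (c p.1)| := by
          rw [height, hM.prefixSum_eq_sum_coveringEdges
            fun p hp => colorSign_eq_neg_iff.2 (hc p hp).symm]
      _ ≤ ∑ p ∈ coveringEdges M k, |colorSign (c p.1)| := abs_sum_le_sum_abs _ _
      _ = coverCount M k := by rw [sum_congr rfl habs, sum_const, nsmul_one, coverCount]
  rw [Int.abs_eq_natAbs] at hle
  exact_mod_cast hle

lemma isDyckPath_natAbs_height {c : Fin N → Bool} (hc : ∑ i, colorSign (c i) = 0) :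
    IsDyckPath N fun k => (height c k).natAbs where
  zero := by rw [height, prefixSum_zero, Int.natAbs_zero]
  eq_zero_of_le k hk := by rw [height, prefixSum_of_le _ hk, hc, Int.natAbs_zero]
  step k hk := by
    have := height_step c hk
    omega

lemma pos_iff_pos_of_unit_steps {h : ℕ → ℤ} {a b : ℕ} (hab : a ≤ b)
    (hstep : ∀ k ∈ Set.Ico a b, h (k + 1) = h k + 1 ∨ h (k + 1) = h k - 1)
    (hne : ∀ k ∈ Set.Icc a b, h k ≠ 0) : 0 < h a ↔ 0 < h b := by
  induction b, hab using Nat.le_induction with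
  | base => rfl
  | succ b hab ih =>
    rw [ih (fun k hk => hstep k ⟨hk.1, hk.2.trans (Nat.lt_succ_self b)⟩)
      fun k hk => hne k ⟨hk.1, hk.2.trans (Nat.le_succ b)⟩]
    have := hstep b ⟨hab, Nat.lt_succ_self b⟩
    have := hne b ⟨hab, Nat.le_succ b⟩
    have := hne (b + 1) ⟨hab.trans (Nat.le_succ b), le_rfl⟩
    omega

lemma IsExcursion.opposite_steps {h : ℕ → ℤ} {i j : ℕ}
    (hij : IsExcursion (fun k => (h k).natAbs) i j)
    (hstep : ∀ k ∈ Set.Icc i j, h (k + 1) = h k + 1 ∨ h (k + 1) = h k - 1) :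
    h (j + 1) - h j = -(h (i + 1) - h i) := by
  have hsign : 0 < h (i + 1) ↔ 0 < h j :=
    pos_iff_pos_of_unit_steps hij.lt
      (fun k hk => hstep k ⟨(Nat.le_succ i).trans hk.1, hk.2.le⟩)
      fun k hk => Int.natAbs_pos.1 (Nat.zero_lt_of_lt (hij.above k hk))
  have hi := hij.above (i + 1) ⟨Nat.lt_succ_self i, hij.lt⟩
  have hj := hij.above j ⟨hij.lt, le_rfl⟩
  have heq := hij.eq
  have := hstep i ⟨le_rfl, hij.lt.le⟩
  have := hstep j ⟨hij.lt.le, le_rfl⟩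
  omega

/-- The matching attached to a coloring `c` by the excursions of `|height c|`; for balanced `c` it
is the one of least weight. -/
noncomputable def heightMatching (c : Fin N → Bool) : Finset (Fin N × Fin N) :=
  excursionMatching N fun k => (height c k).natAbs

lemma color_ne_of_mem_heightMatching {c : Fin N → Bool} {p : Fin N × Fin N}
    (hp : p ∈ heightMatching c) : c p.1 ≠ c p.2 := by
  have hsteps := (mem_excursionMatching.1 hp).opposite_steps
    fun k hk => height_step c (hk.2.trans_lt p.2.isLt)
  rw [height_succ, height_succ, add_sub_cancel_left, add_sub_cancel_left] at hsteps
  exact (colorSign_eq_neg_iff.1 hsteps).symm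

lemma isNCMatching_heightMatching {c : Fin N → Bool} (hc : ∑ i, colorSign (c i) = 0) :
    IsNCMatching c (heightMatching c) :=
  isNCMatching_iff.2 ⟨(isDyckPath_natAbs_height hc).isPerfectMatching_excursionMatching,
    isNonCrossing_excursionMatching _, fun _ => color_ne_of_mem_heightMatching⟩

lemma coverCount_heightMatching_lt {c : Fin N → Bool} (hc : ∑ i, colorSign (c i) = 0)
    (hM : IsNCMatching c M) (hne : M ≠ heightMatching c) :
    coverCount (heightMatching c) < coverCount M := by
  obtain ⟨hperfect, hcross, hcolor⟩ := isNCMatching_iff.1 hM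
  rw [heightMatching, (isDyckPath_natAbs_height hc).coverCount_excursionMatching]
  refine lt_of_le_of_ne (natAbs_height_le_coverCount hperfect hcolor) fun heq => hne ?_
  rw [eq_excursionMatching_coverCount hperfect hcross, ← heq, heightMatching]

lemma matchingWeight_heightMatching_lt {c : Fin N → Bool} (hc : ∑ i, colorSign (c i) = 0)
    {x : Fin N → ℝ} (hx : StrictMono x) (hM : IsNCMatching c M) (hne : M ≠ heightMatching c) :
    matchingWeight x (heightMatching c) < matchingWeight x M :=
  matchingWeight_lt_of_coverCount_lt hx
    (fun p hp => ((isNCMatching_heightMatching hc).1 p hp).1.le) (fun p hp => (hM.1 p hp).1.le)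
    (coverCount_heightMatching_lt hc hM hne)

end

/-- For a balanced coloring of `2n` collinear points with strictly increasing
positions, there is a unique minimum-weight non-crossing perfect bichromatic
matching: a unique non-crossing perfect bichromatic matching `M` such that every
other non-crossing perfect bichromatic matching has strictly larger weight. -/
theorem min_noncrossing_matching_unique
    (n : ℕ) (hn : 1 ≤ n) (c : Fin (2 * n) → Bool)
    (hbal : (Finset.univ.filter (fun i => c i = true)).card = n)
    (x : Fin (2 * n) → ℝ) (hx : StrictMono x) :
    ∃! M : Finset (Fin (2 * n) × Fin (2 * n)),
      IsNCMatching c M ∧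
      ∀ M' : Finset (Fin (2 * n) × Fin (2 * n)),
        IsNCMatching c M' → M' ≠ M → matchingWeight x M < matchingWeight x M' := by
  have hc : ∑ i, colorSign (c i) = 0 := by
    rw [sum_colorSign_eq, hbal]
    push_cast
    ring
  have hmin : ∀ M, IsNCMatching c M → M ≠ heightMatching c →
      matchingWeight x (heightMatching c) < matchingWeight x M :=
    fun _ => matchingWeight_heightMatching_lt hc hx
  refine ⟨heightMatching c, ⟨isNCMatching_heightMatching hc, hmin⟩, ?_⟩
  rintro M ⟨hM, hMmin⟩
  by_contra hne
  exact (hmin M hM hne).asymm (hMmin _ (isNCMatching_heightMatching hc) (Ne.symm hne))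
end

section
/- Let k be even with k ∣ n. Then every bichromatic travelling salesman tour of the 2n chunked equidistant points on the circle has total length at least n·k + 2n + 2n/k (that is, n(k + 2 + 2/k)). -/
/-- The cyclic successor of an index. -/
def nextIdx {m : ℕ} (i : Fin m) : Fin m := ⟨(i.val + 1) % m, Nat.mod_lt _ i.pos⟩

/-- Point `i` of the chunked configuration is red iff `⌊i/k⌋` is even
(the points form alternately colored chunks of `k` consecutive points). -/
def redPt (k : ℕ) {m : ℕ} (i : Fin m) : Bool := decide ((i.val / k) % 2 = 0)

/-- The length of the edge between points `i` and `j` of the `2n` equidistant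
points on the circle: one more than the hop distance along the circle. -/
def edgeLen (n : ℕ) (i j : Fin (2 * n)) : ℕ :=
  min (((j : ℕ) + 2 * n - (i : ℕ)) % (2 * n)) (((i : ℕ) + 2 * n - (j : ℕ)) % (2 * n)) + 1

/-- `v` is a bichromatic travelling salesman tour: a cyclic enumeration of all
`2n` points in which cyclically consecutive points have different colors. -/
def IsBichromaticTour (n k : ℕ) (v : Fin (2 * n) → Fin (2 * n)) : Prop :=
  Function.Bijective v ∧ ∀ i : Fin (2 * n), redPt k (v i) ≠ redPt k (v (nextIdx i))

/-- The total length of a tour. -/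
def tourLength (n : ℕ) (v : Fin (2 * n) → Fin (2 * n)) : ℕ :=
  ∑ i : Fin (2 * n), edgeLen n (v i) (v (nextIdx i))

/-!
Count, for each of the `2n` gaps between adjacent points, the tour edges whose shortest arc passes
over it; up to the additive `2n`, the tour length is the sum of these counts. An edge with exactly
one endpoint in `[a, b)` passes over gap `a` or gap `b`. If `[a, b)` lies inside a chunk, all
`2(b - a)` edges at its points leave it, so gaps placed symmetrically at distance `d` from the
center of a chunk are passed at least `4d` times in total. As `k` is even, this pairing omits the
central gap of each chunk; the central gaps of two chunks are together passed at least twice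
because the tour must enter and leave the interval between them. Every pair of consecutive chunks
thus contributes at least `k² + 2`, and there are `n / k` such pairs.
-/

open Finset

lemma nextIdx_injective {m : ℕ} : (nextIdx : Fin m → Fin m).Injective := fun i j hij ↦
  Fin.ext (Nat.ModEq.eq_of_lt_of_lt (Nat.ModEq.add_right_cancel' 1 (Fin.ext_iff.1 hij)) i.2 j.2)

lemma val_nextIdx_iterate {m : ℕ} (i : Fin m) (t : ℕ) : (nextIdx^[t] i).val = (i + t) % m := by
  induction t with
  | zero => exact (Nat.mod_eq_of_lt i.2).symm
  | succ t ih => simp only [Function.iterate_succ_apply', nextIdx, ih, Nat.mod_add_mod, add_assoc]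

lemma exists_nextIdx_iterate_eq {m : ℕ} (i j : Fin m) : ∃ t, nextIdx^[t] i = j := by
  refine ⟨m - i + j, Fin.ext ?_⟩
  rw [val_nextIdx_iterate, show i.val + (m - i + j) = j + m by omega, Nat.add_mod_right,
    Nat.mod_eq_of_lt j.2]

lemma exists_mem_nextIdx_notMem {m : ℕ} {T : Finset (Fin m)} (hT : T.Nonempty)
    (hT' : T ≠ univ) : ∃ i ∈ T, nextIdx i ∉ T := by
  by_contra! hclosed
  obtain ⟨i, hi⟩ := hT
  refine hT' (eq_univ_of_forall fun j ↦ ?_)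
  obtain ⟨t, rfl⟩ := exists_nextIdx_iterate_eq i j
  exact Set.MapsTo.iterate (s := (T : Set (Fin m))) hclosed t hi

/-- The edge boundary of a set `T` of vertices of the directed `m`-cycle, the edge from `i` to
its cyclic successor being represented by `i`. -/
def cyclicBoundary {m : ℕ} (T : Finset (Fin m)) : Finset (Fin m) :=
  {i | ¬(i ∈ T ↔ nextIdx i ∈ T)}

lemma mem_cyclicBoundary {m : ℕ} {T : Finset (Fin m)} {i : Fin m} :
    i ∈ cyclicBoundary T ↔ ¬(i ∈ T ↔ nextIdx i ∈ T) :=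
  mem_filter_univ i

/-- The cycle leaves `T` as often as it enters `T`. -/
lemma card_cyclicBoundary {m : ℕ} (T : Finset (Fin m)) :
    #(cyclicBoundary T) = 2 * #{i ∈ T | nextIdx i ∉ T} := by
  let T' : Finset (Fin m) := {i | nextIdx i ∈ T}
  have hmem {i} : i ∈ T' ↔ nextIdx i ∈ T := mem_filter_univ i
  have hcard : #T' = #T := by
    refine card_nbij nextIdx (fun i hi ↦ hmem.1 hi) nextIdx_injective.injOn fun j hj ↦ ?_
    obtain ⟨i, rfl⟩ := Finite.surjective_of_injective nextIdx_injective j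
    exact ⟨i, hmem.2 hj, rfl⟩
  have hexit : ({i ∈ T | nextIdx i ∉ T} : Finset (Fin m)) = T \ T' := by
    ext i
    rw [mem_filter, mem_sdiff, hmem]
  have hboundary : cyclicBoundary T = T \ T' ∪ T' \ T := by
    ext i
    simp only [mem_cyclicBoundary, mem_union, mem_sdiff, hmem]
    tauto
  rw [hexit, hboundary, card_union_of_disjoint disjoint_sdiff_sdiff, card_sdiff_comm hcard,
    two_mul]

lemma two_le_card_cyclicBoundary {m : ℕ} {T : Finset (Fin m)} (hT : T.Nonempty)
    (hT' : T ≠ univ) : 2 ≤ #(cyclicBoundary T) := by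
  obtain ⟨i, hi, hi'⟩ := exists_mem_nextIdx_notMem hT hT'
  have hexit : 0 < #{i ∈ T | nextIdx i ∉ T} := card_pos.2 ⟨i, mem_filter.2 ⟨hi, hi'⟩⟩
  rw [card_cyclicBoundary]
  omega

lemma card_cyclicBoundary_of_forall_nextIdx_notMem {m : ℕ} {T : Finset (Fin m)}
    (hT : ∀ i ∈ T, nextIdx i ∉ T) : #(cyclicBoundary T) = 2 * #T := by
  rw [card_cyclicBoundary, filter_true_of_mem hT]

/-- The gaps on a shortest arc between the points `x` and `y` of `N` points on a circle, where gap
`g` separates the point `g - 1` from the point `g` (gap `0` separates `N - 1` from `0`). Of two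
antipodal arcs it is the one that avoids gap `0`. -/
def shortArc {N : ℕ} (x y : Fin N) : Finset ℕ :=
  if 2 * #(Ioc (min x.val y) (max x.val y)) ≤ N then Ioc (min x.val y) (max x.val y)
  else range N \ Ioc (min x.val y) (max x.val y)

lemma shortArc_comm {N : ℕ} (x y : Fin N) : shortArc x y = shortArc y x := by
  simp only [shortArc, min_comm, max_comm]

lemma shortArc_subset_range {N : ℕ} (x y : Fin N) : shortArc x y ⊆ range N := by
  intro g hg
  unfold shortArc at hg
  split_ifs at hg <;> simp only [mem_sdiff, mem_Ioc, mem_range] at * <;> omega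

lemma card_shortArc {N : ℕ} {x y : Fin N} (hxy : x ≤ y) :
    #(shortArc x y) = min (y.val - x) (N - (y - x)) := by
  have hsub : Ioc x.val y ⊆ range N := fun g hg ↦ by
    simp only [mem_Ioc, mem_range] at *
    omega
  have hcard := card_sdiff_of_subset hsub
  simp only [card_range, Nat.card_Ioc] at hcard
  simp only [shortArc, min_eq_left (Fin.val_le_of_le hxy), max_eq_right (Fin.val_le_of_le hxy),
    Nat.card_Ioc]
  split_ifs
  · rw [Nat.card_Ioc]
    omega
  · omega

lemma mem_shortArc_or_mem_shortArc {N a b : ℕ} {x y : Fin N} (ha : a < N) (hb : b < N)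
    (h : ¬(x.val ∈ Ico a b ↔ y.val ∈ Ico a b)) : a ∈ shortArc x y ∨ b ∈ shortArc x y := by
  unfold shortArc
  split_ifs <;> simp only [mem_sdiff, mem_range, mem_Ioc, mem_Ico] at * <;> omega

lemma edgeLen_comm (n : ℕ) (x y : Fin (2 * n)) : edgeLen n x y = edgeLen n y x := by
  rw [edgeLen, edgeLen, min_comm]

lemma edgeLen_eq_card_shortArc_add_one (n : ℕ) (x y : Fin (2 * n)) :
    edgeLen n x y = #(shortArc x y) + 1 := by
  wlog hxy : x ≤ y generalizing x y
  · rw [edgeLen_comm, shortArc_comm, this y x (le_of_not_ge hxy)]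
  rw [card_shortArc hxy, edgeLen]
  have hforward : (y.val + 2 * n - x) % (2 * n) = y - x := by
    rw [Nat.sub_add_comm hxy, Nat.add_mod_right, Nat.mod_eq_of_lt (by omega)]
  rw [hforward]
  obtain rfl | hlt := hxy.eq_or_lt
  · simp
  · rw [Fin.lt_def] at hlt
    rw [Nat.mod_eq_of_lt (a := x.val + 2 * n - y) (by omega)]
    omega

/-- The number of edges of the closed tour `v` whose shortest arc passes over the gap `g`. -/
def gapCrossings {N : ℕ} (v : Fin N → Fin N) (g : ℕ) : ℕ :=
  #{i | g ∈ shortArc (v i) (v (nextIdx i))}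

lemma tourLength_eq_sum_gapCrossings (n : ℕ) (v : Fin (2 * n) → Fin (2 * n)) :
    tourLength n v = ∑ g ∈ range (2 * n), gapCrossings v g + 2 * n := by
  have hcount := sum_card_bipartiteAbove_eq_sum_card_bipartiteBelow (s := univ)
    (t := range (2 * n)) (fun i g ↦ g ∈ shortArc (v i) (v (nextIdx i)))
  simp only [bipartiteAbove, bipartiteBelow, filter_mem_eq_inter,
    inter_eq_right.2 (shortArc_subset_range _ _)] at hcount
  simp only [tourLength, edgeLen_eq_card_shortArc_add_one, sum_add_distrib, hcount, gapCrossings,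
    sum_const, card_univ, Fintype.card_fin, smul_eq_mul, mul_one]

/-- The positions at which the tour `v` visits a point of the interval `[a, b)`. -/
def visits {N : ℕ} (v : Fin N → Fin N) (a b : ℕ) : Finset (Fin N) :=
  {i | (v i).val ∈ Ico a b}

lemma mem_visits {N a b : ℕ} {v : Fin N → Fin N} {i : Fin N} :
    i ∈ visits v a b ↔ (v i).val ∈ Ico a b :=
  mem_filter_univ i

lemma card_visits {N a b : ℕ} {v : Fin N → Fin N} (hv : v.Bijective) (hb : b ≤ N) :
    #(visits v a b) = b - a := by
  rw [← Nat.card_Ico]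
  refine card_nbij (fun i ↦ (v i).val) (fun i hi ↦ mem_visits.1 hi)
    (fun i _ j _ hij ↦ hv.1 (Fin.ext hij)) fun p hp ↦ ?_
  obtain ⟨i, hi⟩ := hv.2 ⟨p, (mem_Ico.1 hp).2.trans_le hb⟩
  have hval : (v i).val = p := congrArg Fin.val hi
  exact ⟨i, mem_visits.2 (hval.symm ▸ hp), hval⟩

lemma card_cyclicBoundary_visits_le {N a b : ℕ} (v : Fin N → Fin N) (ha : a < N) (hb : b < N) :
    #(cyclicBoundary (visits v a b)) ≤ gapCrossings v a + gapCrossings v b := by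
  refine (card_le_card fun i hi ↦ ?_).trans (card_union_le _ _)
  rw [mem_cyclicBoundary, mem_visits, mem_visits] at hi
  simpa only [mem_union, mem_filter_univ] using mem_shortArc_or_mem_shortArc ha hb hi

lemma two_le_gapCrossings_add {N a b : ℕ} {v : Fin N → Fin N} (hv : v.Bijective)
    (ha : 0 < a) (hab : a < b) (hb : b < N) : 2 ≤ gapCrossings v a + gapCrossings v b := by
  have hcard : #(visits v a b) = b - a := card_visits hv hb.le
  refine (two_le_card_cyclicBoundary (card_pos.1 (by omega)) fun huniv ↦ ?_).trans
    (card_cyclicBoundary_visits_le v (by omega) hb)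
  rw [huniv, card_univ, Fintype.card_fin] at hcard
  omega

lemma redPt_eq_of_mem_chunk {k m c : ℕ} {p : Fin m} (hp : p.val ∈ Ico (c * k) ((c + 1) * k)) :
    redPt k p = decide (c % 2 = 0) := by
  rw [mem_Ico] at hp
  rw [redPt, Nat.div_eq_of_lt_le hp.1 hp.2]

lemma two_mul_sub_le_gapCrossings_add {n k c a b : ℕ} {v : Fin (2 * n) → Fin (2 * n)}
    (hv : IsBichromaticTour n k v) (ha : c * k ≤ a) (hab : a ≤ b) (hbk : b ≤ (c + 1) * k)
    (hb : b < 2 * n) : 2 * (b - a) ≤ gapCrossings v a + gapCrossings v b := by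
  have hchunk {i} (hi : i ∈ visits v a b) : redPt k (v i) = decide (c % 2 = 0) :=
    redPt_eq_of_mem_chunk (Ico_subset_Ico ha hbk (mem_visits.1 hi))
  have hindep : ∀ i ∈ visits v a b, nextIdx i ∉ visits v a b := fun i hi hi' ↦
    hv.2 i ((hchunk hi).trans (hchunk hi').symm)
  rw [← card_visits hv.1 hb.le, ← card_cyclicBoundary_of_forall_nextIdx_notMem hindep]
  exact card_cyclicBoundary_visits_le v (by omega) hb

/-- The arguments at distance `d` from the center `a + r` form a pair contributing `4 * d`. -/
lemma center_add_le_sum_Ico {f : ℕ → ℕ} {a r : ℕ}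
    (hf : ∀ x y, a ≤ x → x ≤ y → y ≤ a + 2 * r → 2 * (y - x) ≤ f x + f y) :
    f (a + r) + 2 * r * (r + 1) ≤ ∑ g ∈ Ico a (a + 2 * r + 1), f g := by
  induction r generalizing a with
  | zero => simp
  | succ r ih =>
    have hinner := ih (a := a + 1) fun x y hx hxy hy ↦ hf x y (by omega) hxy (by omega)
    have houter := hf a (a + 2 * (r + 1)) le_rfl (by omega) le_rfl
    rw [sum_Ico_succ_top (by omega), sum_eq_sum_Ico_succ_bot (by omega)]
    rw [show a + 1 + r = a + (r + 1) by ring, show a + 1 + 2 * r + 1 = a + 2 * (r + 1) by ring]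
      at hinner
    rw [Nat.add_sub_cancel_left] at houter
    linarith

lemma nsmul_le_sum_range_of_le_sum_Ico {M : Type*} [AddCommMonoid M] [PartialOrder M]
    [IsOrderedAddMonoid M] {f : ℕ → M} {m L : ℕ} {B : M}
    (hf : ∀ i < m, B ≤ ∑ g ∈ Ico (i * L) (i * L + L), f g) :
    m • B ≤ ∑ g ∈ range (m * L), f g := by
  induction m with
  | zero => simp
  | succ m ih =>
    have hinit := ih fun i hi ↦ hf i (by omega)
    have hlast := hf m (by omega)
    rw [add_one_mul m L, ← sum_range_add_sum_Ico _ (Nat.le_add_right (m * L) L), succ_nsmul]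
    exact add_le_add hinit hlast

/-- The first chunk is summed with both of its end gaps, the second one with neither, so that
consecutive pairs of chunks share no gap. -/
lemma sq_add_two_le_sum_gapCrossings {n h c : ℕ} {v : Fin (2 * n) → Fin (2 * n)} (hh : 0 < h)
    (hv : IsBichromaticTour n (2 * h) v) (hc : (c + 2) * (2 * h) ≤ 2 * n) :
    (2 * h) ^ 2 + 2 ≤ ∑ g ∈ Ico (c * (2 * h)) (c * (2 * h) + 4 * h), gapCrossings v g := by
  obtain ⟨r, rfl⟩ := Nat.exists_eq_add_one.2 hh
  set a := c * (2 * (r + 1)) with ha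
  have hsucc : (c + 1) * (2 * (r + 1)) = a + 2 * (r + 1) := by rw [ha]; ring
  have hsucc' : (c + 2) * (2 * (r + 1)) = a + 4 * (r + 1) := by rw [ha]; ring
  have hfirst := center_add_le_sum_Ico (f := gapCrossings v) (a := a) (r := r + 1)
    fun x y hx hxy hy ↦ two_mul_sub_le_gapCrossings_add hv hx hxy (by omega) (by omega)
  have hsecond := center_add_le_sum_Ico (f := gapCrossings v) (a := a + 2 * (r + 1) + 1) (r := r)
    fun x y hx hxy hy ↦ two_mul_sub_le_gapCrossings_add hv (c := c + 1) (by omega) hxy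
      (by rw [add_assoc, hsucc']; omega) (by omega)
  have hmid := two_le_gapCrossings_add hv.1 (a := a + (r + 1)) (b := a + 2 * (r + 1) + 1 + r)
    (by omega) (by omega) (by omega)
  rw [← sum_Ico_consecutive _ (show a ≤ a + 2 * (r + 1) + 1 by omega) (by omega),
    show a + 4 * (r + 1) = a + 2 * (r + 1) + 1 + 2 * r + 1 by ring]
  linarith

/-- For even chunk size `k` dividing `n`, every bichromatic travelling salesman
tour of the `2n` chunked equidistant points on the circle has total length at
least `n·k + 2n + 2n/k`. -/
theorem tsp_chunked_circle_even_lower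
    (n k : ℕ) (hn : 1 ≤ n) (hk : 1 ≤ k) (hdvd : k ∣ n) (hke : Even k) :
    ∀ v : Fin (2 * n) → Fin (2 * n), IsBichromaticTour n k v →
      n * k + 2 * n + 2 * n / k ≤ tourLength n v := by
  intro v hv
  obtain ⟨m, rfl⟩ := hdvd
  obtain ⟨h, rfl⟩ := hke.exists_two_nsmul
  simp only [smul_eq_mul] at *
  have hpoints : 2 * (2 * h * m) = m * (4 * h) := by ring
  have hchunks : 2 * (2 * h * m) / (2 * h) = 2 * m :=
    Nat.div_eq_of_eq_mul_right hk (by ring)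
  have hdouble : ∀ i < m, (2 * h) ^ 2 + 2 ≤
      ∑ g ∈ Ico (i * (4 * h)) (i * (4 * h) + 4 * h), gapCrossings v g := by
    intro i hi
    have hc : (2 * i + 2) * (2 * h) ≤ 2 * (2 * h * m) := by nlinarith
    have hbound := sq_add_two_le_sum_gapCrossings (by omega) hv hc
    rwa [show 2 * i * (2 * h) = i * (4 * h) by ring] at hbound
  have hsum := nsmul_le_sum_range_of_le_sum_Ico hdouble
  rw [← hpoints, smul_eq_mul] at hsum
  rw [tourLength_eq_sum_gapCrossings, hchunks]
  linarith
end
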